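/- arXiv:2307.14546 — 2 statements merged into one kernel-verified Lean document; each statement's English description precedes it below -/
import Mathlib

section
/- For all complex numbers p, q, a, b (with real parts p_R, q_R, a_R, b_R and imaginary parts p_I, q_I, a_I, b_I) and every natural number m, ∫₀^{2π} exp(p·cos x + q·sin x)·cos(a·cos x + b·sin x − m·x) dx = π·[ (A₁ + i·B₁)^m · S_m(C₁ + i·D₁) + (A₂ + i·B₂)^m · S_m(C₂ + i·D₂) ], where A₁ = (p_R + a_I − q_I + b_R)/2, A₂ = (p_R − a_I + q_I + b_R)/2, B₁ = (p_I − a_R + q_R + b_I)/2, B₂ = (p_I + a_R − q_R + b_I)/2, C₁ = ((p_R+a_I)² + (q_R+b_I)² − (p_I−a_R)² − (q_I−b_R)²)/4, C₂ = ((p_R−a_I)² + (q_R−b_I)² − (p_I+a_R)² − (q_I+b_R)²)/4, D₁ = ((p_I−a_R)(p_R+a_I) + (q_I−b_R)(q_R+b_I))/2, and D₂ = ((p_I+a_R)(p_R−a_I) + (q_I+b_R)(q_R−b_I))/2. -/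
open scoped Real

/-- `S m z = ∑_{k=0}^∞ z^k / (k! (m+k)!)`, i.e. `₀F₁(; m+1; z) / m!`. -/
noncomputable def S (m : ℕ) (z : ℂ) : ℂ :=
  ∑' k : ℕ, z ^ k / ((k.factorial : ℂ) * ((m + k).factorial : ℂ))

lemma aux_exp_int (n : ℤ) :
    (∫ x : ℝ in (0:ℝ)..(2 * π), Complex.exp ((n * Complex.I) * x)) =
      if n = 0 then (2 * π : ℂ) else 0 := by
  split_ifs with h
  · subst h; simp
  · have hc : (n * Complex.I : ℂ) ≠ 0 := by
      simp [h]
    rw [integral_exp_mul_complex hc]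
    have : Complex.exp ((n * Complex.I) * ((2 * π : ℝ) : ℂ)) = 1 := by
      rw [Complex.exp_eq_one_iff]
      exact ⟨n, by push_cast; ring⟩
    rw [this]; simp

noncomputable def auxC (u v : ℂ) (z : ℕ × ℕ) : ℂ :=
  u ^ z.1 / (z.1.factorial : ℂ) * (v ^ z.2 / (z.2.factorial : ℂ))

def auxN (m : ℕ) (z : ℕ × ℕ) : ℤ := (z.1 : ℤ) - z.2 - m

lemma aux_hu (w : ℂ) : HasSum (fun k : ℕ => w ^ k / (k.factorial : ℂ)) (Complex.exp w) := by
  rw [Complex.exp_eq_exp_ℂ]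
  exact NormedSpace.expSeries_div_hasSum_exp w

lemma aux_hprod (w w' : ℂ) : Summable (fun z : ℕ × ℕ => ‖auxC w w' z‖) :=
  Summable.mul_norm (f := fun k : ℕ => w ^ k / (k.factorial : ℂ))
    (g := fun k : ℕ => w' ^ k / (k.factorial : ℂ))
    (NormedSpace.norm_expSeries_div_summable w) (NormedSpace.norm_expSeries_div_summable w')

lemma aux_norm (n : ℤ) (x : ℝ) : ‖Complex.exp ((n * Complex.I) * x)‖ = 1 := by
  have h : (n * Complex.I) * x = (((n : ℝ) * x : ℝ) : ℂ) * Complex.I := by push_cast; ring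
  rw [h, Complex.norm_exp_ofReal_mul_I]

lemma aux_pt (u v : ℂ) (m : ℕ) (x : ℝ) (z : ℕ × ℕ) :
    auxC u v z * Complex.exp ((auxN m z * Complex.I) * x) =
    auxC (u * Complex.exp (Complex.I * x)) (v * Complex.exp (-(Complex.I * x))) z *
      Complex.exp (-(Complex.I * (m * x))) := by
  have : Complex.exp ((auxN m z * Complex.I) * x) =
      Complex.exp (Complex.I * x) ^ z.1 * Complex.exp (-(Complex.I * x)) ^ z.2 *
      Complex.exp (-(Complex.I * (m * x))) := by
    rw [← Complex.exp_nat_mul, ← Complex.exp_nat_mul, ← Complex.exp_add, ← Complex.exp_add]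
    congr 1; unfold auxN; push_cast; ring
  rw [this]
  unfold auxC
  rw [mul_pow, mul_pow]
  ring

lemma aux_sum (u v : ℂ) (m : ℕ) (x : ℝ) :
    HasSum (fun z => auxC u v z * Complex.exp ((auxN m z * Complex.I) * x))
      (Complex.exp (u * Complex.exp (Complex.I * x) + v * Complex.exp (-(Complex.I * x))
        - Complex.I * (m * x))) := by
  have h0 := (aux_hu (u * Complex.exp (Complex.I * x))).mul
        (aux_hu (v * Complex.exp (-(Complex.I * x)))) (aux_hprod _ _).of_norm
  have h := h0.mul_right (Complex.exp (-(Complex.I * (m * x))))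
  rw [sub_eq_add_neg, Complex.exp_add, Complex.exp_add]
  simp only [aux_pt]
  exact h

lemma aux_key (u v : ℂ) (m : ℕ) :
    HasSum (fun z : ℕ × ℕ => ∫ x : ℝ in (0:ℝ)..(2 * π),
      auxC u v z * Complex.exp ((auxN m z * Complex.I) * x))
      (∫ x : ℝ in (0:ℝ)..(2 * π),
      Complex.exp (u * Complex.exp (Complex.I * x) + v * Complex.exp (-(Complex.I * x))
        - Complex.I * (m * x))) := by
  apply intervalIntegral.hasSum_integral_of_dominated_convergence (fun z _ => ‖auxC u v z‖)
  · intro z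
    apply Continuous.aestronglyMeasurable
    fun_prop
  · intro z
    refine Filter.Eventually.of_forall fun x _ => ?_
    rw [norm_mul, aux_norm, mul_one]
  · exact Filter.Eventually.of_forall fun x _ => aux_hprod u v
  · exact intervalIntegrable_const
  · exact Filter.Eventually.of_forall fun x _ => aux_sum u v m x

lemma aux_main (u v : ℂ) (m : ℕ) :
    (∫ x : ℝ in (0:ℝ)..(2 * π),
      Complex.exp (u * Complex.exp (Complex.I * x) + v * Complex.exp (-(Complex.I * x))
        - Complex.I * (m * x))) = 2 * π * (u ^ m * S m (u * v)) := by
  have key := aux_key u v m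
  simp only [intervalIntegral.integral_const_mul, aux_exp_int] at key
  have hinj : Function.Injective (fun k : ℕ => ((m + k, k) : ℕ × ℕ)) := by
    intro k l h; exact (Prod.ext_iff.1 h).2
  rw [← hinj.hasSum_iff] at key
  · rw [← key.tsum_eq, S, ← tsum_mul_left, ← tsum_mul_left]
    refine tsum_congr fun k => ?_
    have : auxN m (m + k, k) = 0 := by simp [auxN]
    simp only [Function.comp, this, if_true, auxC]
    have h1 : (k.factorial : ℂ) ≠ 0 := by exact_mod_cast k.factorial_ne_zero
    have h2 : ((m + k).factorial : ℂ) ≠ 0 := by exact_mod_cast (m + k).factorial_ne_zero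
    field_simp
    ring
  · intro z hz
    rw [if_neg, mul_zero]
    intro h
    apply hz
    refine ⟨z.2, Prod.ext ?_ rfl⟩
    simp only [auxN] at h
    simp only
    omega

lemma aux_main' (u v : ℂ) (m : ℕ) :
    (∫ x : ℝ in (0:ℝ)..(2 * π),
      Complex.exp (u * Complex.exp (Complex.I * x) + v * Complex.exp (-(Complex.I * x))
        + Complex.I * (m * x))) = 2 * π * (v ^ m * S m (u * v)) := by
  rw [mul_comm u v, ← aux_main v u m]
  have h := intervalIntegral.integral_comp_sub_left (a := 0) (b := 2 * π) (fun x : ℝ =>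
      Complex.exp (v * Complex.exp (Complex.I * x) + u * Complex.exp (-(Complex.I * x))
        - Complex.I * (m * x))) (2 * π)
  simp only [sub_self, sub_zero] at h
  rw [← h]
  refine intervalIntegral.integral_congr fun x _ => ?_
  have e1 : Complex.exp (Complex.I * ((2 * π - x : ℝ) : ℂ)) = Complex.exp (-(Complex.I * x)) := by
    rw [Complex.exp_eq_exp_iff_exists_int]
    exact ⟨1, by push_cast; ring⟩
  have e2 : Complex.exp (-(Complex.I * ((2 * π - x : ℝ) : ℂ))) = Complex.exp (Complex.I * x) := by
    rw [Complex.exp_eq_exp_iff_exists_int]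
    exact ⟨-1, by push_cast; ring⟩
  rw [e1, e2, Complex.exp_eq_exp_iff_exists_int]
  exact ⟨m, by push_cast; ring⟩

theorem gr_3937_2_complex_params (p q a b : ℂ) (m : ℕ) :
    (∫ x : ℝ in (0:ℝ)..(2 * π),
        Complex.exp (p * Complex.cos x + q * Complex.sin x) *
          Complex.cos (a * Complex.cos x + b * Complex.sin x - m * x)) =
      (π : ℂ) *
        ((((p.re + a.im - q.im + b.re) / 2 : ℂ) +
              Complex.I * ((p.im - a.re + q.re + b.im) / 2 : ℂ)) ^ m *
            S m ((((p.re + a.im)^2 + (q.re + b.im)^2 - (p.im - a.re)^2 - (q.im - b.re)^2) / 4 : ℂ) +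
              Complex.I * (((p.im - a.re) * (p.re + a.im) + (q.im - b.re) * (q.re + b.im)) / 2 : ℂ)) +
          (((p.re - a.im + q.im + b.re) / 2 : ℂ) +
              Complex.I * ((p.im + a.re - q.re + b.im) / 2 : ℂ)) ^ m *
            S m ((((p.re - a.im)^2 + (q.re - b.im)^2 - (p.im + a.re)^2 - (q.im + b.re)^2) / 4 : ℂ) +
              Complex.I * (((p.im + a.re) * (p.re - a.im) + (q.im + b.re) * (q.re - b.im)) / 2 : ℂ))) := by
  have hI := Complex.I_sq
  have hp := Complex.re_add_im p
  have hq := Complex.re_add_im q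
  have ha := Complex.re_add_im a
  have hb := Complex.re_add_im b
  have E1 : (((p.re + a.im - q.im + b.re) / 2 : ℂ) +
      Complex.I * ((p.im - a.re + q.re + b.im) / 2 : ℂ)) =
      (p - Complex.I * a + Complex.I * (q - Complex.I * b)) / 2 := by
    linear_combination (norm := skip) (1/2 : ℂ) * (hp - Complex.I * ha + Complex.I * hq + hb)
    ring_nf; simp only [Complex.I_sq]; ring
  have E2 : (((p.re - a.im + q.im + b.re) / 2 : ℂ) +
      Complex.I * ((p.im + a.re - q.re + b.im) / 2 : ℂ)) =
      (p + Complex.I * a - Complex.I * (q + Complex.I * b)) / 2 := by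
    linear_combination (norm := skip) (1/2 : ℂ) * (hp + Complex.I * ha - Complex.I * hq + hb)
    ring_nf; simp only [Complex.I_sq]; ring
  have F1 : ((((p.re + a.im)^2 + (q.re + b.im)^2 - (p.im - a.re)^2 - (q.im - b.re)^2) / 4 : ℂ) +
      Complex.I * (((p.im - a.re) * (p.re + a.im) + (q.im - b.re) * (q.re + b.im)) / 2 : ℂ)) =
      ((p - Complex.I * a - Complex.I * (q - Complex.I * b)) / 2) *
      ((p - Complex.I * a + Complex.I * (q - Complex.I * b)) / 2) := by
    have hP : p - Complex.I * a = (p.re + a.im) + Complex.I * (p.im - a.re) := by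
      linear_combination (-hp + Complex.I * ha) - a.im * hI
    have hQ : q - Complex.I * b = (q.re + b.im) + Complex.I * (q.im - b.re) := by
      linear_combination (-hq + Complex.I * hb) - b.im * hI
    rw [hP, hQ]
    ring_nf; simp only [Complex.I_sq, Complex.I_pow_three, Complex.I_pow_four]; ring
  have F2 : ((((p.re - a.im)^2 + (q.re - b.im)^2 - (p.im + a.re)^2 - (q.im + b.re)^2) / 4 : ℂ) +
      Complex.I * (((p.im + a.re) * (p.re - a.im) + (q.im + b.re) * (q.re - b.im)) / 2 : ℂ)) =
      ((p + Complex.I * a - Complex.I * (q + Complex.I * b)) / 2) *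
      ((p + Complex.I * a + Complex.I * (q + Complex.I * b)) / 2) := by
    have hP : p + Complex.I * a = (p.re - a.im) + Complex.I * (p.im + a.re) := by
      linear_combination (-hp - Complex.I * ha) + a.im * hI
    have hQ : q + Complex.I * b = (q.re - b.im) + Complex.I * (q.im + b.re) := by
      linear_combination (-hq - Complex.I * hb) + b.im * hI
    rw [hP, hQ]
    ring_nf; simp only [Complex.I_sq, Complex.I_pow_three, Complex.I_pow_four]; ring
  rw [E1, E2, F1, F2]
  have h1 := aux_main' ((p - Complex.I * a - Complex.I * (q - Complex.I * b)) / 2)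
    ((p - Complex.I * a + Complex.I * (q - Complex.I * b)) / 2) m
  have h2 := aux_main ((p + Complex.I * a - Complex.I * (q + Complex.I * b)) / 2)
    ((p + Complex.I * a + Complex.I * (q + Complex.I * b)) / 2) m
  have h3 : ∀ X Y : ℂ, (π : ℂ) * (X + Y) = (2 * π * X + 2 * π * Y) / 2 := by
    intro X Y; ring
  rw [h3, ← h1, ← h2, ← intervalIntegral.integral_add, ← intervalIntegral.integral_div]
  · refine intervalIntegral.integral_congr fun x _ => ?_
    have c1 : Complex.exp (Complex.I * x) = Complex.cos x + Complex.sin x * Complex.I := by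
      rw [mul_comm, Complex.exp_mul_I]
    have c2 : Complex.exp (-(Complex.I * x)) = Complex.cos x - Complex.sin x * Complex.I := by
      rw [show -(Complex.I * x) = (-x : ℂ) * Complex.I by ring, Complex.exp_mul_I,
        Complex.cos_neg, Complex.sin_neg]; ring
    rw [c1, c2]
    generalize Complex.cos x = C
    generalize Complex.sin x = D
    rw [Complex.cos, mul_div_assoc', mul_add, ← Complex.exp_add, ← Complex.exp_add, add_comm]
    congr 3
    · linear_combination (q * D - Complex.I * b * D) * hI
    · linear_combination (q * D + Complex.I * b * D) * hI
  · apply Continuous.intervalIntegrable; fun_prop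
  · apply Continuous.intervalIntegrable; fun_prop
end

section
/- For every complex number p and every natural number m, ∫₀^{2π} exp(p·sin x)·sin(p·cos x + m·x) dx = (2π·p^m/m!)·sin(m·π/2). In particular, no positivity restriction on p is needed. -/
open scoped Real

lemma aux_orth (k : ℤ) : (∫ x : ℝ in (0:ℝ)..(2 * π), Complex.exp ((k * Complex.I) * x)) =
    if k = 0 then 2 * (π : ℂ) else 0 := by
  split_ifs with h
  · subst h; simp
  · rw [integral_exp_mul_complex (by simp [h])]
    have : Complex.exp (k * Complex.I * ((2 * π : ℝ) : ℂ)) = 1 := by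
      rw [Complex.exp_eq_one_iff]; exact ⟨k, by push_cast; ring⟩
    rw [this]; simp

lemma aux_fourier (q : ℂ) (m : ℕ) (s : ℤ) (hs : s ≠ 0) :
    (∫ x : ℝ in (0:ℝ)..(2 * π), Complex.exp (q * Complex.exp (s * Complex.I * x)) *
      Complex.exp (-(m * (s * Complex.I * x)))) = 2 * (π : ℂ) * q ^ m / (m.factorial : ℂ) := by
  have key : HasSum (fun n : ℕ => ∫ x : ℝ in (0:ℝ)..(2 * π),
      (q * Complex.exp (s * Complex.I * x)) ^ n / (n.factorial : ℂ) *
        Complex.exp (-(m * (s * Complex.I * x))))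
      (∫ x : ℝ in (0:ℝ)..(2 * π), Complex.exp (q * Complex.exp (s * Complex.I * x)) *
      Complex.exp (-(m * (s * Complex.I * x)))) := by
    apply intervalIntegral.hasSum_integral_of_dominated_convergence
      (fun n _ => ‖q‖ ^ n / (n.factorial : ℝ))
    · intro n
      apply Continuous.aestronglyMeasurable
      fun_prop
    · intro n
      refine Filter.Eventually.of_forall fun x _ => ?_
      have h1 : ‖Complex.exp (s * Complex.I * x)‖ = 1 := by
        rw [Complex.norm_exp]; simp
      have h2 : ‖Complex.exp (-(m * (s * Complex.I * x)))‖ = 1 := by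
        rw [Complex.norm_exp]; simp
      rw [norm_mul, h2, norm_div, norm_pow, norm_mul, h1]
      simp
    · exact Filter.Eventually.of_forall fun x _ => Real.summable_pow_div_factorial _
    · exact intervalIntegrable_const
    · refine Filter.Eventually.of_forall fun x _ => ?_
      apply HasSum.mul_right
      rw [Complex.exp_eq_exp_ℂ]
      exact NormedSpace.expSeries_div_hasSum_exp _
  have term : ∀ n : ℕ, (∫ x : ℝ in (0:ℝ)..(2 * π),
      (q * Complex.exp (s * Complex.I * x)) ^ n / (n.factorial : ℂ) *
        Complex.exp (-(m * (s * Complex.I * x)))) =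
      if n = m then 2 * (π : ℂ) * q ^ m / (m.factorial : ℂ) else 0 := by
    intro n
    have : ∀ x : ℝ, (q * Complex.exp (s * Complex.I * x)) ^ n / (n.factorial : ℂ) *
        Complex.exp (-(m * (s * Complex.I * x))) = (q ^ n / (n.factorial : ℂ)) *
          Complex.exp ((((s * ((n : ℤ) - m) : ℤ) : ℂ) * Complex.I) * x) := by
      intro x
      have : (((s * ((n : ℤ) - m) : ℤ) : ℂ) * Complex.I) * x =
        n * (s * Complex.I * x) + (-(m * (s * Complex.I * x))) := by push_cast; ring
      rw [this, Complex.exp_add, Complex.exp_nat_mul]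
      ring
    simp_rw [this]
    rw [intervalIntegral.integral_const_mul, aux_orth]
    by_cases h : n = m
    · subst h; simp; ring
    · have : (n : ℤ) - m ≠ 0 := by omega
      simp [h, hs, this]
  simp_rw [term] at key
  exact key.unique (hasSum_ite_eq m _)

theorem gr_3936_2_extended (p : ℂ) (m : ℕ) :
    (∫ x : ℝ in (0:ℝ)..(2 * π),
        Complex.exp (p * Complex.sin x) * Complex.sin (p * Complex.cos x + m * x)) =
      2 * (π : ℂ) * p ^ m / (m.factorial : ℂ) * (Real.sin (m * π / 2) : ℂ) := by
  have h1 := aux_fourier (p * Complex.I) m (-1) (by norm_num)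
  have h2 := aux_fourier (-(p * Complex.I)) m 1 (by norm_num)
  have e : ∀ x : ℝ, Complex.exp (p * Complex.sin x) * Complex.sin (p * Complex.cos x + m * x) =
      (-Complex.I / 2) * (Complex.exp (p * Complex.I * Complex.exp ((-1 : ℤ) * Complex.I * x)) *
        Complex.exp (-(m * ((-1 : ℤ) * Complex.I * x))) -
      Complex.exp (-(p * Complex.I) * Complex.exp ((1 : ℤ) * Complex.I * x)) *
        Complex.exp (-(m * ((1 : ℤ) * Complex.I * x)))) := by
    intro x
    have a1 : Complex.exp ((-1 : ℤ) * Complex.I * x) =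
        Complex.cos x - Complex.sin x * Complex.I := by
      rw [show ((-1 : ℤ) : ℂ) * Complex.I * x = (-x : ℂ) * Complex.I by push_cast; ring,
        Complex.exp_mul_I, Complex.cos_neg, Complex.sin_neg]; ring
    have a2 : Complex.exp ((1 : ℤ) * Complex.I * x) =
        Complex.cos x + Complex.sin x * Complex.I := by
      rw [show ((1 : ℤ) : ℂ) * Complex.I * x = (x : ℂ) * Complex.I by push_cast; ring,
        Complex.exp_mul_I]
    rw [a1, a2, Complex.sin.eq_1 (p * Complex.cos x + m * x), ← Complex.exp_add, ← Complex.exp_add,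
      show ∀ a b c : ℂ, a * ((b - c) * Complex.I / 2) = Complex.I / 2 * (a * b - a * c) by
        intros; ring, ← Complex.exp_add, ← Complex.exp_add,
      show ∀ b c : ℂ, -Complex.I / 2 * (b - c) = Complex.I / 2 * (c - b) by intros; ring]
    congr 3
    · push_cast; linear_combination (p * Complex.sin x) * Complex.I_sq
    · push_cast; linear_combination (p * Complex.sin x) * Complex.I_sq
  simp_rw [e]
  rw [intervalIntegral.integral_const_mul, intervalIntegral.integral_sub, h1, h2]
  · have b1 : Complex.I ^ m = Complex.exp (m * π / 2 * Complex.I) := by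
      rw [show (m * π / 2 * Complex.I : ℂ) = m * (π / 2 * Complex.I) by ring, Complex.exp_nat_mul,
        Complex.exp_pi_div_two_mul_I]
    have b2 : (-Complex.I) ^ m = Complex.exp (-(m * π / 2) * Complex.I) := by
      rw [show (-(m * π / 2) * Complex.I : ℂ) = m * (-π / 2 * Complex.I) by ring,
        Complex.exp_nat_mul, Complex.exp_neg_pi_div_two_mul_I]
    rw [← mul_neg, mul_pow, mul_pow, b1, b2]
    push_cast
    rw [Complex.sin.eq_1]
    ring
  all_goals
    apply Continuous.intervalIntegrable
    fun_prop
end
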